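/- Let d ≥ 1 and let f ∈ ℂ[z₁, z₂, z₃, z₄] be a homogeneous polynomial of degree d such that f(z₁, z₂, 0, 0) = 0 identically (i.e. the surface f = 0 contains the line z₃ = z₄ = 0, which is the twistor fibre over the point at infinity). Then there exists a polynomial P in four variables with complex coefficients, of total degree at most 2(d−1)², such that for every x = (x₁, x₂, x₃, x₄) ∈ ℝ⁴ one has P(x₁, x₂, x₃, x₄) = 0 if and only if the binary form F_x is degenerate. -/

import Mathlib

open Complex MvPolynomial

/-- The first standard point spanning the twistor fibre over `x ∈ ℝ⁴`. -/
noncomputable def twistorP₁ (x : Fin 4 → ℝ) : Fin 4 → ℂ :=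
  ![(x 0 : ℂ) + (x 1 : ℂ) * Complex.I, (x 2 : ℂ) + (x 3 : ℂ) * Complex.I, 1, 0]

/-- The second standard point spanning the twistor fibre over `x ∈ ℝ⁴`. -/
noncomputable def twistorP₂ (x : Fin 4 → ℝ) : Fin 4 → ℂ :=
  ![-(x 2 : ℂ) + (x 3 : ℂ) * Complex.I, (x 0 : ℂ) - (x 1 : ℂ) * Complex.I, 0, 1]

/-- The restriction of the surface `f = 0` to the twistor fibre over `x`, as a binary
form `F_x(λ₁, λ₂) = f(λ₁·p₁(x) + λ₂·p₂(x))` in `ℂ[λ₁, λ₂]`. -/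
noncomputable def fibreForm (f : MvPolynomial (Fin 4) ℂ) (x : Fin 4 → ℝ) :
    MvPolynomial (Fin 2) ℂ :=
  MvPolynomial.aeval (fun i => C (twistorP₁ x i) * X 0 + C (twistorP₂ x i) * X 1) f

/-!
The discriminant of `F_x` is the resultant of its two partial derivatives, a determinant of size
`2(d - 1)` in their coefficients. Taking the formal degrees to be `d - 1` makes it detect a double
root at infinity as well. On the generic twistor line `z₁, z₂` have degree `1` in `x` while
`z₃, z₄` are constant, and every monomial of `f` contains `z₃` or `z₄`: hence each entry of the
determinant has degree at most `d - 1` in `x`. When `d = 1` the form `F_x` does not depend on `x`.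
-/

open scoped Polynomial

section Dehomogenization

/-- Dehomogenization `F ↦ F(X, 1)` of a form in two variables. It forgets the point at infinity
`[1 : 0]`, where the order of vanishing of a form of degree `d` is `d - natDegree F(X, 1)`. -/
noncomputable def dehomogenize (R : Type*) [CommSemiring R] :
    MvPolynomial (Fin 2) R →ₐ[R] R[X] :=
  aeval ![Polynomial.X, 1]

section CommSemiring

variable {R S : Type*} [CommSemiring R] [CommSemiring S]

@[simp]
lemma dehomogenize_C (r : R) : dehomogenize R (C r) = Polynomial.C r := by
  simp [dehomogenize]

@[simp]
lemma dehomogenize_X_zero : dehomogenize R (X 0) = Polynomial.X := by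
  simp [dehomogenize]

@[simp]
lemma dehomogenize_X_one : dehomogenize R (X 1) = 1 := by
  simp [dehomogenize]

lemma dehomogenize_map (φ : R →+* S) (F : MvPolynomial (Fin 2) R) :
    dehomogenize S (map φ F) = (dehomogenize R F).map φ := by
  induction F using MvPolynomial.induction_on with
  | C r => simp
  | add F G hF hG => simp [hF, hG]
  | mul_X F i hF => fin_cases i <;> simp [hF]

lemma coeff_dehomogenize (F : MvPolynomial (Fin 2) R) (k : ℕ) :
    (dehomogenize R F).coeff k = ∑ m ∈ F.support, if k = m 0 then F.coeff m else 0 := by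
  simp [dehomogenize, aeval_def, eval₂_eq', Polynomial.finsetSum_coeff]

lemma natDegree_dehomogenize_le (F : MvPolynomial (Fin 2) R) :
    (dehomogenize R F).natDegree ≤ F.totalDegree := by
  rw [Polynomial.natDegree_le_iff_coeff_eq_zero]
  intro k hk
  rw [coeff_dehomogenize]
  refine Finset.sum_eq_zero fun m hm => if_neg ?_
  have hmF : m.degree ≤ F.totalDegree := le_totalDegree hm
  have hm0 : m 0 ≤ m.degree := Finsupp.le_degree 0 m
  omega

lemma dehomogenize_pderiv_zero (F : MvPolynomial (Fin 2) R) :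
    dehomogenize R (pderiv 0 F) = Polynomial.derivative (dehomogenize R F) := by
  induction F using MvPolynomial.induction_on with
  | C r => simp
  | add F G hF hG => simp [hF, hG]
  | mul_X F i hF => fin_cases i <;> (simp [Derivation.leibniz, pderiv_X, hF]; try ring)

lemma X_mul_derivative_add_dehomogenize_pderiv_one {d : ℕ} {F : MvPolynomial (Fin 2) R}
    (hF : F.IsHomogeneous d) :
    Polynomial.X * Polynomial.derivative (dehomogenize R F) + dehomogenize R (pderiv 1 F) =
      Polynomial.C (d : R) * dehomogenize R F := by
  have euler := congrArg (dehomogenize R) hF.sum_X_mul_pderiv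
  simpa [Fin.sum_univ_two, dehomogenize_pderiv_zero] using euler

lemma homogenize_dehomogenize {d : ℕ} {F : MvPolynomial (Fin 2) R} (hF : F.IsHomogeneous d) :
    (dehomogenize R F).homogenize d = F :=
  Polynomial.homogenize_eq_of_isHomogeneous hF rfl

lemma homogenize_eq_mul_X_one_pow {g : R[X]} {n : ℕ} (hg : g.natDegree ≤ n) :
    g.homogenize n = g.homogenize g.natDegree * X 1 ^ (n - g.natDegree) := by
  have h := Polynomial.homogenize_mul g 1 le_rfl
    ((Polynomial.natDegree_one (R := R)).trans_le (Nat.zero_le (n - g.natDegree)))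
  rwa [mul_one, Nat.add_sub_cancel' hg, Polynomial.homogenize_one] at h

lemma dehomogenize_homogenize {g : R[X]} {n : ℕ} (hg : g.natDegree ≤ n) :
    dehomogenize R (g.homogenize n) = g :=
  Polynomial.aeval_homogenize_X_one g hg

end CommSemiring

section IsDomain

variable {R : Type*} [CommRing R] [IsDomain R] {d : ℕ} {F : MvPolynomial (Fin 2) R}

lemma squarefree_dehomogenize (hF : F.IsHomogeneous d) (hsq : Squarefree F) :
    Squarefree (dehomogenize R F) := by
  intro p hp
  have hsq_dvd : p.homogenize p.natDegree * p.homogenize p.natDegree ∣ F := by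
    have hpp : p.natDegree + p.natDegree = (p * p).natDegree := by simp [← pow_two, two_mul]
    have hdeg := (natDegree_dehomogenize_le F).trans hF.totalDegree_le
    rw [← homogenize_dehomogenize hF, homogenize_eq_mul_X_one_pow hdeg,
      ← Polynomial.homogenize_mul p p le_rfl le_rfl, hpp]
    exact (Polynomial.homogenize_dvd hp).mul_right _
  have hunit := (hsq _ hsq_dvd).map (dehomogenize R)
  rwa [dehomogenize_homogenize le_rfl] at hunit

lemma le_natDegree_dehomogenize_add_one (hF : F.IsHomogeneous d) (hsq : Squarefree F) :
    d ≤ (dehomogenize R F).natDegree + 1 := by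
  by_contra! hlt
  have hdvd : X 1 * X 1 ∣ F := by
    rw [← homogenize_dehomogenize hF, homogenize_eq_mul_X_one_pow (by omega), ← pow_two]
    exact (pow_dvd_pow _ (by omega)).mul_left _
  have hunit := (hsq _ hdvd).map (MvPolynomial.eval ![1, 0])
  simp at hunit

lemma squarefree_of_dehomogenize (hF : F.IsHomogeneous d) (hsq : Squarefree (dehomogenize R F))
    (hdeg : d ≤ (dehomogenize R F).natDegree + 1) : Squarefree F := by
  rintro q ⟨k, hk⟩
  have hF0 : F ≠ 0 := by
    rintro rfl
    exact hsq.ne_zero (map_zero _)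
  have hqk : q * q * k ≠ 0 := hk ▸ hF0
  have hqq := left_ne_zero_of_mul hqk
  have hunit : IsUnit (dehomogenize R q) := hsq _ ⟨dehomogenize R k, by rw [hk, map_mul, map_mul]⟩
  have hk_deg : (dehomogenize R F).natDegree ≤ k.totalDegree :=
    calc (dehomogenize R F).natDegree
      _ ≤ (dehomogenize R q).natDegree + (dehomogenize R q).natDegree +
            (dehomogenize R k).natDegree := by
          rw [hk, map_mul, map_mul]
          exact Polynomial.natDegree_mul_le.trans
            (Nat.add_le_add_right Polynomial.natDegree_mul_le _)
      _ = (dehomogenize R k).natDegree := by simp [Polynomial.natDegree_eq_zero_of_isUnit hunit]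
      _ ≤ k.totalDegree := natDegree_dehomogenize_le k
  have hd : d = q.totalDegree + q.totalDegree + k.totalDegree := by
    rw [← hF.totalDegree hF0, hk, totalDegree_mul_of_isDomain hqq (right_ne_zero_of_mul hqk),
      totalDegree_mul_of_isDomain (left_ne_zero_of_mul hqq) (left_ne_zero_of_mul hqq)]
  have hq : q = C (coeff 0 q) := totalDegree_eq_zero_iff_eq_C.1 (by omega)
  rw [hq, dehomogenize_C, Polynomial.isUnit_C] at hunit
  rw [hq]
  exact hunit.map C

lemma squarefree_iff_dehomogenize (hF : F.IsHomogeneous d) :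
    Squarefree F ↔
      Squarefree (dehomogenize R F) ∧ d ≤ (dehomogenize R F).natDegree + 1 :=
  ⟨fun h => ⟨squarefree_dehomogenize hF h, le_natDegree_dehomogenize_add_one hF h⟩,
    fun h => squarefree_of_dehomogenize hF h.1 h.2⟩

end IsDomain

end Dehomogenization

section Discriminant

lemma resultant_eq_zero_of_coeff_eq_zero {R : Type*} [CommRing R] {A B : R[X]} {m n : ℕ}
    (hmn : m + n ≠ 0) (hA : A.natDegree ≤ m) (hB : B.natDegree ≤ n) (hAm : A.coeff m = 0)
    (hBn : B.coeff n = 0) : A.resultant B m n = 0 := by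
  rcases Nat.eq_zero_or_pos m with rfl | hm
  · rw [Polynomial.resultant_zero_left_deg, hAm, zero_pow (by omega)]
  rcases Nat.eq_zero_or_pos n with rfl | hn
  · rw [Polynomial.resultant_zero_right_deg, hBn, zero_pow (by omega)]
  exact Polynomial.resultant_eq_zero_of_lt_lt A B m n
    ((Polynomial.natDegree_le_pred hA hAm).trans_lt (Nat.sub_one_lt_of_lt hm))
    ((Polynomial.natDegree_le_pred hB hBn).trans_lt (Nat.sub_one_lt_of_lt hn))

lemma resultant_eq_zero_iff_of_coeff_ne_zero {K : Type*} [Field K] {A B : K[X]} {m n : ℕ}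
    (hA : A.natDegree ≤ m) (hB : B.natDegree ≤ n) (hAm : A.coeff m ≠ 0) :
    A.resultant B m n = 0 ↔ ¬ IsCoprime A B := by
  have hA0 : A ≠ 0 := by
    rintro rfl
    exact hAm (Polynomial.coeff_zero m)
  have hm : A.natDegree = m := hA.antisymm (Polynomial.le_natDegree_of_ne_zero hAm)
  obtain ⟨c, rfl⟩ := Nat.exists_eq_add_of_le hB
  rw [Polynomial.resultant_add_right_deg _ _ _ _ _ le_rfl,
    mul_eq_zero_iff_left (pow_ne_zero c hAm), ← hm, Polynomial.resultant_eq_zero_iff]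
  exact and_iff_right (Or.inl hA0)

/-- Both formal leading coefficients vanish exactly when `A` and `B`, homogenized to degrees `m`
and `n`, share the root at infinity. -/
lemma resultant_eq_zero_iff_of_natDegree_le {K : Type*} [Field K] {A B : K[X]} {m n : ℕ}
    (hmn : m + n ≠ 0) (hA : A.natDegree ≤ m) (hB : B.natDegree ≤ n) :
    A.resultant B m n = 0 ↔ A.coeff m = 0 ∧ B.coeff n = 0 ∨ ¬ IsCoprime A B := by
  by_cases hAm : A.coeff m = 0
  · by_cases hBn : B.coeff n = 0
    · simp [hAm, hBn, resultant_eq_zero_of_coeff_eq_zero hmn hA hB hAm hBn]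
    · rw [Polynomial.resultant_comm, IsUnit.mul_right_eq_zero (by simp),
        resultant_eq_zero_iff_of_coeff_ne_zero hB hA hBn, isCoprime_comm]
      simp [hBn]
  · rw [resultant_eq_zero_iff_of_coeff_ne_zero hA hB hAm]
    simp [hAm]

/-- The discriminant of a binary form `F` of degree `d`, as the resultant of its partial
derivatives, of formal degree `d - 1` each. It differs from the classical discriminant by a
constant factor `± d ^ (d - 2)`. -/
noncomputable def binaryDiscr {R : Type*} [CommRing R] (d : ℕ) (F : MvPolynomial (Fin 2) R) : R :=
  Polynomial.resultant (dehomogenize R (pderiv 0 F)) (dehomogenize R (pderiv 1 F)) (d - 1) (d - 1)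

section CommRing

variable {R S : Type*} [CommRing R] [CommRing S] {d : ℕ} {F : MvPolynomial (Fin 2) R}

lemma binaryDiscr_map (φ : R →+* S) (d : ℕ) (F : MvPolynomial (Fin 2) R) :
    binaryDiscr d (map φ F) = φ (binaryDiscr d F) := by
  rw [binaryDiscr, pderiv_map, pderiv_map, dehomogenize_map, dehomogenize_map,
    Polynomial.resultant_map_map, binaryDiscr]

lemma natDegree_dehomogenize_pderiv_le (hF : F.IsHomogeneous d) (i : Fin 2) :
    (dehomogenize R (pderiv i F)).natDegree ≤ d - 1 :=
  (natDegree_dehomogenize_le _).trans hF.pderiv.totalDegree_le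

lemma coeff_dehomogenize_pderiv_one (hF : F.IsHomogeneous (d + 1)) :
    (dehomogenize R (pderiv 1 F)).coeff d = (dehomogenize R F).coeff d := by
  have euler := congrArg (Polynomial.coeff · d) (X_mul_derivative_add_dehomogenize_pderiv_one hF)
  have hX : (Polynomial.X * Polynomial.derivative (dehomogenize R F)).coeff d =
      d * (dehomogenize R F).coeff d := by
    cases d with
    | zero => simp
    | succ k => rw [Polynomial.coeff_X_mul, Polynomial.coeff_derivative]; push_cast; ring
  simp only [Polynomial.coeff_add, hX, Polynomial.coeff_C_mul] at euler
  push_cast at euler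
  linear_combination euler

lemma isCoprime_dehomogenize_pderiv_iff (hF : F.IsHomogeneous d) (hd : IsUnit (d : R)) :
    IsCoprime (dehomogenize R (pderiv 0 F)) (dehomogenize R (pderiv 1 F)) ↔
      (dehomogenize R F).Separable := by
  have euler : dehomogenize R (pderiv 1 F) = Polynomial.C (d : R) * dehomogenize R F +
      Polynomial.derivative (dehomogenize R F) * -Polynomial.X := by
    rw [← X_mul_derivative_add_dehomogenize_pderiv_one hF]
    ring
  rw [euler, dehomogenize_pderiv_zero, IsCoprime.add_mul_left_right_iff, isCoprime_comm,
    isCoprime_mul_unit_left_left (hd.map Polynomial.C), Polynomial.Separable]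

end CommRing

lemma binaryDiscr_eq_zero_iff {K : Type*} [Field K] [PerfectField K] {d : ℕ} (hd : 2 ≤ d)
    (hdK : (d : K) ≠ 0) {F : MvPolynomial (Fin 2) K} (hF : F.IsHomogeneous d) :
    binaryDiscr d F = 0 ↔ ¬ Squarefree F := by
  obtain ⟨m, rfl⟩ := Nat.exists_eq_add_of_le' (one_le_two.trans hd)
  set g := dehomogenize K F with hg
  have hg_deg : g.natDegree ≤ m + 1 := (natDegree_dehomogenize_le F).trans hF.totalDegree_le
  have root_at_infinity : (dehomogenize K (pderiv 0 F)).coeff m = 0 ∧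
      (dehomogenize K (pderiv 1 F)).coeff m = 0 ↔ ¬ m + 1 ≤ g.natDegree + 1 := by
    rw [dehomogenize_pderiv_zero, Polynomial.coeff_derivative, coeff_dehomogenize_pderiv_one hF,
      ← hg, mul_eq_zero_iff_right (by exact_mod_cast hdK)]
    constructor
    · rintro ⟨h_top, h_next⟩
      have := Polynomial.natDegree_le_pred (Polynomial.natDegree_le_pred hg_deg h_top) h_next
      omega
    · intro hlt
      exact ⟨Polynomial.coeff_eq_zero_of_natDegree_lt (by omega),
        Polynomial.coeff_eq_zero_of_natDegree_lt (by omega)⟩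
  rw [binaryDiscr, Nat.add_sub_cancel,
    resultant_eq_zero_iff_of_natDegree_le (m := m) (n := m) (by omega)
      (natDegree_dehomogenize_pderiv_le hF 0) (natDegree_dehomogenize_pderiv_le hF 1),
    root_at_infinity, isCoprime_dehomogenize_pderiv_iff hF hdK.isUnit,
    PerfectField.separable_iff_squarefree, squarefree_iff_dehomogenize hF, not_and_or, or_comm]

end Discriminant

section CoefficientDegrees

/-- The coefficients of `F`, polynomials in the variables `τ` of its coefficient ring, all have
total degree at most `n`. -/
def CoeffTotalDegreeLE {ι τ R : Type*} [CommSemiring R] (n : ℕ)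
    (F : MvPolynomial ι (MvPolynomial τ R)) : Prop :=
  ∀ m, (F.coeff m).totalDegree ≤ n

namespace CoeffTotalDegreeLE

variable {ι τ R : Type*} [CommSemiring R] {F G : MvPolynomial ι (MvPolynomial τ R)} {n k : ℕ}

lemma mono (hF : CoeffTotalDegreeLE n F) (hnk : n ≤ k) : CoeffTotalDegreeLE k F :=
  fun m => (hF m).trans hnk

lemma constant {r : MvPolynomial τ R} (hr : r.totalDegree ≤ n) :
    CoeffTotalDegreeLE n (C r : MvPolynomial ι (MvPolynomial τ R)) := by
  classical
  intro m
  rw [coeff_C]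
  split_ifs <;> simp [hr]

lemma C_mul_X {r : MvPolynomial τ R} (hr : r.totalDegree ≤ n) (i : ι) :
    CoeffTotalDegreeLE n (C r * X i) := by
  classical
  intro m
  rw [coeff_C_mul, coeff_X]
  split_ifs <;> simp [hr]

protected lemma add (hF : CoeffTotalDegreeLE n F) (hG : CoeffTotalDegreeLE n G) :
    CoeffTotalDegreeLE n (F + G) := fun m => by
  rw [coeff_add]
  exact (totalDegree_add _ _).trans (max_le (hF m) (hG m))

protected lemma mul (hF : CoeffTotalDegreeLE n F) (hG : CoeffTotalDegreeLE k G) :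
    CoeffTotalDegreeLE (n + k) (F * G) := fun m => by
  classical
  rw [coeff_mul]
  exact totalDegree_finsetSum_le fun i _ =>
    (totalDegree_mul _ _).trans (add_le_add (hF _) (hG _))

protected lemma pow (hF : CoeffTotalDegreeLE n F) (e : ℕ) : CoeffTotalDegreeLE (e * n) (F ^ e) := by
  induction e with
  | zero => simpa using constant (ι := ι) (r := (1 : MvPolynomial τ R)) (n := 0) (by simp)
  | succ e ih => simpa only [pow_succ, Nat.succ_mul] using ih.mul hF

protected lemma sum {κ : Type*} {s : Finset κ} {F : κ → MvPolynomial ι (MvPolynomial τ R)}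
    (hF : ∀ i ∈ s, CoeffTotalDegreeLE n (F i)) : CoeffTotalDegreeLE n (∑ i ∈ s, F i) :=
  fun m => by
    rw [coeff_sum]
    exact totalDegree_finsetSum_le fun i hi => hF i hi m

protected lemma prod {κ : Type*} {s : Finset κ} {F : κ → MvPolynomial ι (MvPolynomial τ R)}
    {n : κ → ℕ} (hF : ∀ i ∈ s, CoeffTotalDegreeLE (n i) (F i)) :
    CoeffTotalDegreeLE (∑ i ∈ s, n i) (∏ i ∈ s, F i) := by
  classical
  induction s using Finset.induction_on with
  | empty => simpa using constant (ι := ι) (r := (1 : MvPolynomial τ R)) (n := 0) (by simp)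
  | insert i s his ih =>
    rw [Finset.sum_insert his, Finset.prod_insert his]
    exact (hF i (Finset.mem_insert_self i s)).mul
      (ih fun j hj => hF j (Finset.mem_insert_of_mem hj))

protected lemma aeval {σ : Type*} {w : σ → ℕ} {g : σ → MvPolynomial ι (MvPolynomial τ R)}
    (hg : ∀ i, CoeffTotalDegreeLE (w i) (g i)) (f : MvPolynomial σ R) :
    CoeffTotalDegreeLE (weightedTotalDegree w f) (MvPolynomial.aeval g f) := by
  rw [aeval_def, eval₂_eq]
  refine CoeffTotalDegreeLE.sum fun m hm => ?_
  have hcoeff : CoeffTotalDegreeLE 0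
      (algebraMap R (MvPolynomial ι (MvPolynomial τ R)) (f.coeff m)) :=
    constant (by simp)
  refine (hcoeff.mul (.prod fun i _ => (hg i).pow (m i))).mono ?_
  rw [zero_add]
  exact le_weightedTotalDegree w hm

protected lemma pderiv (hF : CoeffTotalDegreeLE n F) (i : ι) : CoeffTotalDegreeLE n (pderiv i F) :=
  fun m => by
    rw [coeff_pderiv, ← Nat.cast_succ, ← map_natCast (C : R →+* MvPolynomial τ R), mul_comm,
      ← smul_eq_C_mul]
    exact (totalDegree_smul_le _ _).trans (hF _)

protected lemma coeff_dehomogenize {F : MvPolynomial (Fin 2) (MvPolynomial τ R)}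
    (hF : CoeffTotalDegreeLE n F) (k : ℕ) :
    ((dehomogenize _ F).coeff k).totalDegree ≤ n := by
  rw [coeff_dehomogenize]
  refine totalDegree_finsetSum_le fun m _ => ?_
  split_ifs <;> simp [hF m]

lemma map_eval_eq (hF : CoeffTotalDegreeLE 0 F) (x y : τ → R) :
    map (MvPolynomial.eval x) F = map (MvPolynomial.eval y) F := by
  ext m
  rw [coeff_map, coeff_map, totalDegree_eq_zero_iff_eq_C.1 (Nat.le_zero.1 (hF m)), eval_C, eval_C]

end CoeffTotalDegreeLE

variable {τ R : Type*} [CommRing R]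

lemma totalDegree_resultant_le {A B : (MvPolynomial τ R)[X]} {a b : ℕ}
    (hA : ∀ k, (A.coeff k).totalDegree ≤ a) (hB : ∀ k, (B.coeff k).totalDegree ≤ b) (m n : ℕ) :
    (A.resultant B m n).totalDegree ≤ m * b + n * a := by
  rw [Polynomial.resultant, Matrix.det_apply]
  refine totalDegree_finsetSum_le fun σ _ => (totalDegree_smul_le _ _).trans ?_
  refine (totalDegree_finsetProd _ _).trans ?_
  rw [Fin.sum_univ_add]
  refine add_le_add ?_ ?_
  · refine (Finset.sum_le_card_nsmul _ _ b fun j _ => ?_).trans (by simp)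
    rw [Polynomial.sylvester, Matrix.of_apply, Fin.addCases_left]
    split_ifs <;> simp [hB _]
  · refine (Finset.sum_le_card_nsmul _ _ a fun j _ => ?_).trans (by simp)
    rw [Polynomial.sylvester, Matrix.of_apply, Fin.addCases_right]
    split_ifs <;> simp [hA _]

lemma totalDegree_binaryDiscr_le {n : ℕ} {F : MvPolynomial (Fin 2) (MvPolynomial τ R)}
    (hF : CoeffTotalDegreeLE n F) (d : ℕ) :
    (binaryDiscr d F).totalDegree ≤ 2 * ((d - 1) * n) :=
  (totalDegree_resultant_le (hF.pderiv 0).coeff_dehomogenize (hF.pderiv 1).coeff_dehomogenize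
    (d - 1) (d - 1)).trans_eq (two_mul _).symm

end CoefficientDegrees

section LineForm

/-- The restriction of `f` to the line through the points `p` and `q` of projective space, as the
binary form `f(λ₁ p + λ₂ q)`. The points may have coordinates in an algebra `A` over the
coefficients of `f`, for instance a ring of polynomials parametrizing a family of lines. -/
noncomputable def lineForm {σ R A : Type*} [CommSemiring R] [CommSemiring A] [Algebra R A]
    (p q : σ → A) (f : MvPolynomial σ R) : MvPolynomial (Fin 2) A :=
  aeval (fun i => C (p i) * X 0 + C (q i) * X 1) f

section CommSemiring

variable {σ R A B : Type*} [CommSemiring R] [CommSemiring A] [CommSemiring B] [Algebra R A]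
  [Algebra R B] {f : MvPolynomial σ R}

lemma isHomogeneous_lineForm {d : ℕ} (hf : f.IsHomogeneous d) (p q : σ → A) :
    (lineForm p q f).IsHomogeneous d := by
  simpa only [lineForm, one_mul] using
    hf.aeval _ fun i => (isHomogeneous_C_mul_X (p i) 0).add (isHomogeneous_C_mul_X (q i) 1)

lemma map_lineForm (φ : A →ₐ[R] B) (p q : σ → A) (f : MvPolynomial σ R) :
    map (φ : A →+* B) (lineForm p q f) = lineForm (fun i => φ (p i)) (fun i => φ (q i)) f := by
  have h : (mapAlgHom φ).comp (aeval fun i => C (p i) * X 0 + C (q i) * X 1) =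
      aeval (R := R) fun i => (C (φ (p i)) * X 0 + C (φ (q i)) * X 1 : MvPolynomial (Fin 2) B) := by
    ext1 i
    simp
  exact DFunLike.congr_fun h f

lemma coeffTotalDegreeLE_lineForm {τ : Type*} {p q : σ → MvPolynomial τ R} {w : σ → ℕ}
    (hp : ∀ i, (p i).totalDegree ≤ w i) (hq : ∀ i, (q i).totalDegree ≤ w i)
    (f : MvPolynomial σ R) : CoeffTotalDegreeLE (weightedTotalDegree w f) (lineForm p q f) :=
  .aeval (fun i => (CoeffTotalDegreeLE.C_mul_X (hp i) 0).add (.C_mul_X (hq i) 1)) f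

/-- Every monomial of `f` contains a variable `X i` with `i ∈ s`, which has weight `0`. -/
lemma weightedTotalDegree_indicator_compl_le {d : ℕ} (hf : f.IsHomogeneous d) {s : Set σ}
    (hfs : f ∈ Ideal.span (X '' s)) : weightedTotalDegree (sᶜ.indicator 1) f ≤ d - 1 := by
  refine Finset.sup_le fun m hm => ?_
  obtain ⟨i, his, him⟩ := mem_ideal_span_X_image.1 hfs m hm
  have hmd : Finsupp.weight 1 m = d := hf (mem_support_iff.1 hm)
  have hle (m' : σ →₀ ℕ) :
      Finsupp.weight (sᶜ.indicator 1) m' ≤ Finsupp.weight (1 : σ → ℕ) m' := by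
    simp only [Finsupp.weight_apply]
    exact Finsupp.sum_le_sum fun j _ =>
      Nat.mul_le_mul_left _ (Set.indicator_le_self sᶜ (1 : σ → ℕ) j)
  calc Finsupp.weight (sᶜ.indicator 1) m
    _ = Finsupp.weight (sᶜ.indicator 1) (m - Finsupp.single i 1) := by
        rw [← Finsupp.weight_sub_single_add him, Set.indicator_of_notMem (by simpa using his),
          add_zero]
    _ ≤ Finsupp.weight (1 : σ → ℕ) (m - Finsupp.single i 1) := hle _
    _ = d - 1 := by
        rw [← hmd, ← Finsupp.weight_sub_single_add him, Pi.one_apply, Nat.add_sub_cancel]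

end CommSemiring

lemma mem_span_X_image_of_eval_eq_zero {σ R : Type*} [CommRing R] [IsDomain R] [Infinite R]
    {f : MvPolynomial σ R} {s : Set σ}
    (hf : ∀ z : σ → R, (∀ i ∈ s, z i = 0) → eval z f = 0) : f ∈ Ideal.span (X '' s) := by
  classical
  let kill : σ → MvPolynomial σ R := fun i => if i ∈ s then 0 else X i
  have hkill : bind₁ kill f = 0 := MvPolynomial.funext fun z => by
    have heval : eval z (bind₁ kill f) = eval (fun i => eval z (kill i)) f :=
      eval₂Hom_bind₁ (RingHom.id R) z kill f
    rw [heval, map_zero]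
    exact hf _ fun i hi => by simp [kill, hi]
  have hmk : (Ideal.Quotient.mkₐ R (Ideal.span (X '' s))).comp (bind₁ kill) =
      Ideal.Quotient.mkₐ R (Ideal.span (X '' s)) := by
    ext i
    by_cases hi : i ∈ s
    · have hX : (X i : MvPolynomial σ R) ∈ Ideal.span (X '' s) :=
        Ideal.subset_span (Set.mem_image_of_mem X hi)
      simp [kill, hi, Ideal.Quotient.eq_zero_iff_mem.2 hX]
    · simp [kill, hi]
  rw [← Ideal.Quotient.eq_zero_iff_mem, ← Ideal.Quotient.mkₐ_eq_mk R, ← hmk, AlgHom.comp_apply,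
    hkill, map_zero]

end LineForm

section DiscriminantLocus

lemma CoeffTotalDegreeLE.exists_totalDegree_eq_zero {ι τ K : Type*} [Field K]
    {F : MvPolynomial ι (MvPolynomial τ K)} (hF : CoeffTotalDegreeLE 0 F) :
    ∃ P : MvPolynomial τ K, P.totalDegree = 0 ∧
      ∀ x, eval x P = 0 ↔ ¬ Squarefree (map (eval x) F) := by
  by_cases hsq : Squarefree (map (eval 0) F)
  · exact ⟨1, totalDegree_one, fun x => by simpa [hF.map_eval_eq x 0] using hsq⟩
  · exact ⟨0, totalDegree_zero, fun x => by simpa [hF.map_eval_eq x 0] using hsq⟩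

theorem discriminant_locus_polynomial_with_line_at_infinity_general {K σ τ : Type*} [Field K]
    [PerfectField K] {d : ℕ} (hd : (d : K) ≠ 0) {s : Set σ} {p q : σ → MvPolynomial τ K}
    (hp : ∀ i, (p i).totalDegree ≤ sᶜ.indicator 1 i)
    (hq : ∀ i, (q i).totalDegree ≤ sᶜ.indicator 1 i)
    {f : MvPolynomial σ K} (hf : f.IsHomogeneous d) (hfs : f ∈ Ideal.span (X '' s)) :
    ∃ P : MvPolynomial τ K, P.totalDegree ≤ 2 * (d - 1) ^ 2 ∧
      ∀ x, eval x P = 0 ↔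
        ¬ Squarefree (lineForm (fun i => eval x (p i)) (fun i => eval x (q i)) f) := by
  have hmap (x : τ → K) : lineForm (fun i => eval x (p i)) (fun i => eval x (q i)) f =
      map (eval x) (lineForm p q f) := (map_lineForm (aeval x) p q f).symm
  have hcoeff : CoeffTotalDegreeLE (d - 1) (lineForm p q f) :=
    (coeffTotalDegreeLE_lineForm hp hq f).mono (weightedTotalDegree_indicator_compl_le hf hfs)
  simp only [hmap]
  have hd_pos : 1 ≤ d := Nat.one_le_iff_ne_zero.2 (by rintro rfl; simp at hd)
  rcases hd_pos.eq_or_lt with rfl | hd_two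
  · obtain ⟨P, hP, hPx⟩ := hcoeff.exists_totalDegree_eq_zero
    exact ⟨P, hP.le, hPx⟩
  · refine ⟨binaryDiscr d (lineForm p q f),
      (totalDegree_binaryDiscr_le hcoeff d).trans_eq (by ring), fun x => ?_⟩
    rw [← binaryDiscr_map,
      binaryDiscr_eq_zero_iff hd_two hd ((isHomogeneous_lineForm hf p q).map (eval x))]

end DiscriminantLocus

section TwistorFibre

lemma mem_span_X_two_X_three {R : Type*} [CommRing R] [IsDomain R] [Infinite R]
    {f : MvPolynomial (Fin 4) R} (hf : ∀ z₁ z₂ : R, eval ![z₁, z₂, 0, 0] f = 0) :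
    f ∈ Ideal.span (X '' {2, 3}) :=
  mem_span_X_image_of_eval_eq_zero fun z hz => by
    have hz_eq : z = ![z 0, z 1, 0, 0] := by
      ext i
      fin_cases i <;> simp [hz]
    rw [hz_eq]
    exact hf (z 0) (z 1)

/-- `twistorP₁ x` as a polynomial in the coordinates of `x`. -/
noncomputable def genericTwistorP₁ : Fin 4 → MvPolynomial (Fin 4) ℂ :=
  ![X 0 + C I * X 1, X 2 + C I * X 3, 1, 0]

/-- `twistorP₂ x` as a polynomial in the coordinates of `x`. -/
noncomputable def genericTwistorP₂ : Fin 4 → MvPolynomial (Fin 4) ℂ :=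
  ![C I * X 3 - X 2, X 0 - C I * X 1, 0, 1]

lemma fibreForm_eq_lineForm (f : MvPolynomial (Fin 4) ℂ) (x : Fin 4 → ℝ) :
    fibreForm f x = lineForm (fun i => eval (fun j => (x j : ℂ)) (genericTwistorP₁ i))
      (fun i => eval (fun j => (x j : ℂ)) (genericTwistorP₂ i)) f := by
  have h₁ (i : Fin 4) : twistorP₁ x i = eval (fun j => (x j : ℂ)) (genericTwistorP₁ i) := by
    fin_cases i <;> simp [twistorP₁, genericTwistorP₁, mul_comm]
  have h₂ (i : Fin 4) : twistorP₂ x i = eval (fun j => (x j : ℂ)) (genericTwistorP₂ i) := by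
    fin_cases i <;> simp [twistorP₂, genericTwistorP₂, mul_comm, neg_add_eq_sub]
  simp only [fibreForm, lineForm, h₁, h₂]

lemma totalDegree_genericTwistorP₁_le (i : Fin 4) :
    (genericTwistorP₁ i).totalDegree ≤ ({2, 3} : Set (Fin 4))ᶜ.indicator 1 i := by
  have hlin (j k : Fin 4) : (X j + C I * X k : MvPolynomial (Fin 4) ℂ).totalDegree ≤ 1 :=
    ((isHomogeneous_X ℂ j).add (isHomogeneous_C_mul_X I k)).totalDegree_le
  fin_cases i <;> simp [genericTwistorP₁, hlin]

lemma totalDegree_genericTwistorP₂_le (i : Fin 4) :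
    (genericTwistorP₂ i).totalDegree ≤ ({2, 3} : Set (Fin 4))ᶜ.indicator 1 i := by
  have h₀ : (C I * X 3 - X 2 : MvPolynomial (Fin 4) ℂ).totalDegree ≤ 1 :=
    ((isHomogeneous_C_mul_X I 3).sub (isHomogeneous_X ℂ 2)).totalDegree_le
  have h₁ : (X 0 - C I * X 1 : MvPolynomial (Fin 4) ℂ).totalDegree ≤ 1 :=
    ((isHomogeneous_X ℂ 0).sub (isHomogeneous_C_mul_X I 1)).totalDegree_le
  fin_cases i <;> simp [genericTwistorP₂, h₀, h₁]

end TwistorFibre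

/-- If the degree `d` surface `f = 0` contains the twistor line over infinity (the line
`z₃ = z₄ = 0`), then its discriminant locus in `ℝ⁴` is cut out by a single complex-valued
polynomial of degree at most `2(d−1)²` in the real coordinates. -/
theorem discriminant_locus_polynomial_with_line_at_infinity (d : ℕ) (hd : 1 ≤ d)
    (f : MvPolynomial (Fin 4) ℂ) (hf : f.IsHomogeneous d)
    (hline : ∀ z₁ z₂ : ℂ, MvPolynomial.eval ![z₁, z₂, 0, 0] f = 0) :
    ∃ P : MvPolynomial (Fin 4) ℂ, P.totalDegree ≤ 2 * (d - 1) ^ 2 ∧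
      ∀ x : Fin 4 → ℝ,
        (MvPolynomial.eval (fun i => (x i : ℂ)) P = 0 ↔ ¬ Squarefree (fibreForm f x)) := by
  obtain ⟨P, hP, hPx⟩ := discriminant_locus_polynomial_with_line_at_infinity_general
    (Nat.cast_ne_zero.2 (Nat.one_le_iff_ne_zero.1 hd)) totalDegree_genericTwistorP₁_le
    totalDegree_genericTwistorP₂_le hf (mem_span_X_two_X_three hline)
  exact ⟨P, hP, fun x => by rw [fibreForm_eq_lineForm, hPx]⟩
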